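/- For each integer n ≥ 2, let λ_n be the largest real root of the polynomial t^{4n−2} − t^{3n−1} − t^{3n−2} − t^{n} − t^{n−1} + 1 (such a root exists and satisfies λ_n > 1), and let μ be the largest real root of t^{4} − 2t^{3} − 2t + 1. Then lim_{n→∞} (2n − 1) · log λ_n = 2 · log μ. -/

import Mathlib

open Filter

/-- The clique polynomial `t^{4n-2} - t^{3n-1} - t^{3n-2} - t^n - t^{n-1} + 1`
of the fibered class `(2n-1, 1, n-1)₋`, as a real function. -/
noncomputable def Pfun (n : ℕ) (t : ℝ) : ℝ :=
  t ^ (4 * n - 2) - t ^ (3 * n - 1) - t ^ (3 * n - 2) - t ^ n - t ^ (n - 1) + 1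

/-- Root formula. -/
noncomputable def Yf (c : ℝ) : ℝ := (c + Real.sqrt (c ^ 2 + 8)) / 2

/-- Root formula. -/
noncomputable def Ff (c : ℝ) : ℝ := (Yf c + Real.sqrt (Yf c ^ 2 - 4)) / 2

lemma Ff_cont : Continuous Ff := by
  unfold Ff Yf
  fun_prop

lemma root_eq (x c : ℝ) (hx : 1 < x) (hc : 0 < c)
    (h : x ^ 4 - c * x ^ 3 - c * x + 1 = 0) : x = Ff c := by
  have hx0 : 0 < x := by linarith
  have hi1 : x⁻¹ < 1 := inv_lt_one_of_one_lt₀ hx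
  have hi0 : 0 < x⁻¹ := by positivity
  have hxi : x * x⁻¹ = 1 := mul_inv_cancel₀ hx0.ne'
  set z := x⁻¹ with hz
  have hy : (x + z) ^ 2 - 2 - c * (x + z) = 0 := by
    have h2 : x ^ 2 * ((x + z) ^ 2 - 2 - c * (x + z)) = 0 := by
      have : x ^ 2 * ((x + z) ^ 2 - 2 - c * (x + z))
          = x ^ 4 + 2 * x ^ 2 * (x * z) + (x * z) ^ 2 - 2 * x ^ 2 - c * x ^ 3
            - c * x * (x * z) := by ring
      rw [this, hxi]; linarith
    rcases mul_eq_zero.mp h2 with h3 | h3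
    · exact absurd h3 (by positivity)
    · exact h3
  have hyc : 0 ≤ 2 * (x + z) - c := by
    by_contra hcon
    push Not at hcon
    nlinarith [mul_pos (show 0 < x + z by linarith) (show 0 < c - 2 * (x + z) by linarith),
      sq_nonneg (x + z)]
  have h1 : Yf c = x + z := by
    unfold Yf
    have : Real.sqrt (c ^ 2 + 8) = 2 * (x + z) - c := by
      rw [show c ^ 2 + 8 = (2 * (x + z) - c) ^ 2 by linear_combination (-4) * hy]
      exact Real.sqrt_sq hyc
    rw [this]; ring
  unfold Ff
  rw [h1]
  have : Real.sqrt ((x + z) ^ 2 - 4) = x - z := by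
    rw [show (x + z) ^ 2 - 4 = (x - z) ^ 2 by linear_combination 4 * hxi]
    exact Real.sqrt_sq (by linarith)
  rw [this]; ring

lemma Pfun_succ (k : ℕ) (t : ℝ) : Pfun (k + 1) t =
    t ^ (4 * k + 2) - t ^ (3 * k + 2) - t ^ (3 * k + 1) - t ^ (k + 1) - t ^ k + 1 := by
  unfold Pfun
  rw [show 4 * (k + 1) - 2 = 4 * k + 2 by omega, show 3 * (k + 1) - 1 = 3 * k + 2 by omega,
    show 3 * (k + 1) - 2 = 3 * k + 1 by omega, show k + 1 - 1 = k by omega]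

lemma Pfun_cont (n : ℕ) : Continuous (Pfun n) := by
  unfold Pfun
  fun_prop

lemma Pfun_one (n : ℕ) : Pfun n 1 = -2 := by
  unfold Pfun
  norm_num

lemma Pfun_pos (n : ℕ) (hn : 2 ≤ n) (t : ℝ) (ht : 5 ≤ t) : 0 < Pfun n t := by
  unfold Pfun
  have h1 : (1 : ℝ) ≤ t := by linarith
  have a1 : t ^ (3 * n - 2) ≤ t ^ (3 * n - 1) := pow_le_pow_right₀ h1 (by omega)
  have a2 : t ^ n ≤ t ^ (3 * n - 1) := pow_le_pow_right₀ h1 (by omega)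
  have a3 : t ^ (n - 1) ≤ t ^ (3 * n - 1) := pow_le_pow_right₀ h1 (by omega)
  have a4 : t ^ (3 * n - 1 + 1) ≤ t ^ (4 * n - 2) := pow_le_pow_right₀ h1 (by omega)
  rw [pow_succ] at a4
  have a5 : 0 < t ^ (3 * n - 1) := by positivity
  nlinarith

lemma exists_largest (n : ℕ) (hn : 2 ≤ n) :
    ∃ L : ℝ, 1 < L ∧ Pfun n L = 0 ∧ ∀ r : ℝ, Pfun n r = 0 → r ≤ L := by
  have hcomp : IsCompact (Set.Icc (1 : ℝ) 5 ∩ {t | Pfun n t = 0}) :=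
    isCompact_Icc.inter_right (isClosed_eq (Pfun_cont n) continuous_const)
  have hne : (Set.Icc (1 : ℝ) 5 ∩ {t | Pfun n t = 0}).Nonempty := by
    have := intermediate_value_Icc (show (1 : ℝ) ≤ 5 by norm_num) (Pfun_cont n).continuousOn
    obtain ⟨t, ht, h0⟩ := this (show (0 : ℝ) ∈ Set.Icc (Pfun n 1) (Pfun n 5) from
      ⟨by rw [Pfun_one]; norm_num, (Pfun_pos n hn 5 le_rfl).le⟩)
    exact ⟨t, ht, h0⟩
  obtain ⟨L, ⟨hL, hL0⟩, hmax⟩ := hcomp.exists_isGreatest hne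
  have hL0' : Pfun n L = 0 := hL0
  refine ⟨L, lt_of_le_of_ne hL.1 ?_, hL0, ?_⟩
  · rintro rfl
    rw [Pfun_one] at hL0'
    norm_num at hL0'
  · intro r hr
    by_cases h1 : r < 1
    · linarith [hL.1]
    · by_cases h5 : 5 ≤ r
      · exact absurd hr (Pfun_pos n hn r h5).ne'
      · exact hmax ⟨⟨by linarith, by linarith⟩, hr⟩

lemma key (k : ℕ) (hk : 1 ≤ k) (w : ℝ) (hw : 1 < w) (h : Pfun (k + 1) (w ^ 2) = 0) :
    w ^ (2 * k + 1) = Ff (w + w⁻¹) ∧ w ≤ 1 + 1 / (k : ℝ) := by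
  have hw0 : 0 < w := by linarith
  have hwi : w * w⁻¹ = 1 := mul_inv_cancel₀ hw0.ne'
  have hi0 : 0 < w⁻¹ := by positivity
  have hi1 : w⁻¹ < 1 := inv_lt_one_of_one_lt₀ hw
  have hx1 : 1 < w ^ (2 * k + 1) := one_lt_pow₀ hw (by omega)
  have heq : (w ^ (2 * k + 1)) ^ 4 - (w + w⁻¹) * (w ^ (2 * k + 1)) ^ 3
      - (w + w⁻¹) * w ^ (2 * k + 1) + 1 = 0 := by
    rw [Pfun_succ] at h
    have e : (w ^ (2 * k + 1)) = (w ^ k) ^ 2 * w := by ring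
    rw [e]
    have h' : (w ^ k) ^ 8 * w ^ 4 - (w ^ k) ^ 6 * w ^ 4 - (w ^ k) ^ 6 * w ^ 2
      - (w ^ k) ^ 2 * w ^ 2 - (w ^ k) ^ 2 + 1 = 0 := by
      rw [← h]; ring
    linear_combination h' - ((w ^ k) ^ 6 * w ^ 2 + (w ^ k) ^ 2) * hwi
  refine ⟨root_eq _ _ hx1 (by positivity) heq, ?_⟩
  have hx3 : w ^ (2 * k + 1) ≤ 3 * w := by
    by_contra hcon
    push Not at hcon
    generalize w ^ (2 * k + 1) = x at *
    have hc : w + w⁻¹ ≤ 2 / 3 * x := by linarith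
    have hp : 0 < x ^ 3 + x := by positivity
    have := mul_le_mul_of_nonneg_right hc hp.le
    have hx9 : 9 < x ^ 2 := by nlinarith
    nlinarith
  have h3 : w ^ (2 * k) ≤ 3 := by
    rw [pow_succ] at hx3
    exact le_of_mul_le_mul_right hx3 hw0
  have hb := one_add_mul_le_pow (show (-2 : ℝ) ≤ w - 1 by linarith) (2 * k)
  rw [show 1 + (w - 1) = w by ring] at hb
  push_cast at hb
  have hk0 : (0 : ℝ) < k := by exact_mod_cast hk
  have : w - 1 ≤ 1 / (k : ℝ) := by
    rw [le_div_iff₀ hk0]; linarith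
  linarith

theorem stmt13 :
    (∀ n : ℕ, 2 ≤ n →
      ∃ L : ℝ, 1 < L ∧ Pfun n L = 0 ∧ ∀ r : ℝ, Pfun n r = 0 → r ≤ L) ∧
    ∀ (lam : ℕ → ℝ) (mu : ℝ),
      (∀ n : ℕ, 2 ≤ n → Pfun n (lam n) = 0 ∧ ∀ r : ℝ, Pfun n r = 0 → r ≤ lam n) →
      (mu ^ 4 - 2 * mu ^ 3 - 2 * mu + 1 = 0 ∧
        ∀ r : ℝ, r ^ 4 - 2 * r ^ 3 - 2 * r + 1 = 0 → r ≤ mu) →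
      Tendsto (fun n : ℕ => (2 * (n : ℝ) - 1) * Real.log (lam n)) atTop
        (nhds (2 * Real.log mu)) := by
  refine ⟨exists_largest, ?_⟩
  intro lam mu hlam hmu
  have hmu1 : 1 < mu := by
    have hc : ContinuousOn (fun r : ℝ => r ^ 4 - 2 * r ^ 3 - 2 * r + 1) (Set.Icc 2 3) := by
      fun_prop
    obtain ⟨t, ht, h0⟩ := intermediate_value_Icc (show (2 : ℝ) ≤ 3 by norm_num) hc
      (show (0 : ℝ) ∈ Set.Icc _ _ from ⟨by norm_num, by norm_num⟩)
    have := hmu.2 t h0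
    linarith [ht.1]
  have hmuF : mu = Ff 2 := root_eq mu 2 hmu1 (by norm_num) hmu.1
  have hl1 : ∀ n, 2 ≤ n → 1 < lam n := by
    intro n hn
    obtain ⟨L, h1, h2, -⟩ := exists_largest n hn
    exact h1.trans_le ((hlam n hn).2 L h2)
  rw [← tendsto_add_atTop_iff_nat 1]
  have hw1 : ∀ k : ℕ, 1 ≤ k → 1 < Real.sqrt (lam (k + 1)) := by
    intro k hk
    rw [Real.lt_sqrt (by norm_num)]
    simpa using hl1 (k + 1) (by omega)
  have hsq : ∀ k : ℕ, 1 ≤ k → Real.sqrt (lam (k + 1)) ^ 2 = lam (k + 1) := fun k hk =>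
    Real.sq_sqrt (by linarith [hl1 (k + 1) (by omega)])
  have hkey : ∀ k : ℕ, 1 ≤ k → _ := fun k hk =>
    key k hk (Real.sqrt (lam (k + 1))) (hw1 k hk)
      (by rw [hsq k hk]; exact (hlam (k + 1) (by omega)).1)
  have hwlim : Tendsto (fun k : ℕ => Real.sqrt (lam (k + 1))) atTop (nhds 1) := by
    have hup : Tendsto (fun k : ℕ => 1 + 1 / (k : ℝ)) atTop (nhds 1) := by
      simpa using (tendsto_one_div_atTop_nhds_zero_nat (𝕜 := ℝ)).const_add 1
    refine tendsto_of_tendsto_of_tendsto_of_le_of_le' tendsto_const_nhds hup ?_ ?_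
    · filter_upwards [eventually_ge_atTop 1] with k hk using (hw1 k hk).le
    · filter_upwards [eventually_ge_atTop 1] with k hk using (hkey k hk).2
  have hclim : Tendsto (fun k : ℕ => Real.sqrt (lam (k + 1)) + (Real.sqrt (lam (k + 1)))⁻¹)
      atTop (nhds 2) := by
    have := hwlim.add (hwlim.inv₀ one_ne_zero)
    rwa [show (1 : ℝ) + 1⁻¹ = 2 by norm_num] at this
  have hF := (Ff_cont.tendsto 2).comp hclim
  rw [← hmuF] at hF
  have hlog := (hF.log (by linarith)).const_mul 2
  refine hlog.congr' ?_
  filter_upwards [eventually_ge_atTop 1] with k hk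
  simp only [Function.comp]
  rw [← (hkey k hk).1, Real.log_pow, Real.log_sqrt (by linarith [hl1 (k + 1) (by omega)])]
  push_cast
  ring
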